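/- arXiv:0810.5152 — 2 statements merged into one kernel-verified Lean document; each statement's English description precedes it below -/
import Mathlib

section
/- Let S be a finite set equipped with a strict partial order ⊏. If every totally disordered subset of S (a subset whose elements are pairwise incomparable with respect to ⊏) has at most k elements, then S can be partitioned into at most k subsets each of which is linearly ordered by ⊏. Moreover, if l denotes the maximal cardinality of a totally disordered subset of S, then S can be partitioned into exactly l linearly ordered subsets. -/
/-- Pairwise incomparable finite sets. -/
def DAnti {α : Type*} (r : α → α → Prop) (X : Finset α) : Prop :=
  ∀ x ∈ X, ∀ y ∈ X, x ≠ y → ¬ r x y ∧ ¬ r y x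

theorem dil_max {α : Type*} (r : α → α → Prop) (T : Finset α) (hT : T.Nonempty)
    (hirr : ∀ x ∈ T, ¬ r x x)
    (htrans : ∀ x ∈ T, ∀ y ∈ T, ∀ z ∈ T, r x y → r y z → r x z) :
    ∃ a ∈ T, ∀ y ∈ T, ¬ r a y := by
  classical
  induction hT using Finset.Nonempty.cons_induction with
  | singleton a => exact ⟨a, by simp, by simpa using hirr⟩
  | cons b s hb hs ih =>
    obtain ⟨a, ha, hay⟩ := ih (fun x hx => hirr x (by simp [hx]))
      (fun x hx y hy z hz => htrans x (by simp [hx]) y (by simp [hy]) z (by simp [hz]))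
    by_cases h : r a b
    · refine ⟨b, by simp, fun y hy hby => ?_⟩
      rcases Finset.mem_cons.1 hy with rfl | hy'
      · exact hirr _ hy hby
      · exact hay y hy' (htrans a (by simp [ha]) b (by simp) y hy h hby)
    · refine ⟨a, by simp [ha], fun y hy hay' => ?_⟩
      rcases Finset.mem_cons.1 hy with rfl | hy'
      · exact h hay'
      · exact hay y hy' hay'

/-- In a chain coloring with colors `< m`, an antichain injects into the colors. -/
theorem dil_inj {α : Type*} (r : α → α → Prop) (S X : Finset α) (hX : X ⊆ S) (hA : DAnti r X)
    (c : α → ℕ) (hc : ∀ x ∈ S, ∀ y ∈ S, x ≠ y → c x = c y → r x y ∨ r y x) :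
    Set.InjOn c X := by
  intro x hx y hy hxy
  by_contra hne
  have := hA x hx y hy hne
  have := hc x (hX hx) y (hX hy) hne hxy
  tauto

theorem dil_card {α : Type*} (r : α → α → Prop) (S X : Finset α) (hX : X ⊆ S) (hA : DAnti r X)
    (c : α → ℕ) (hc : ∀ x ∈ S, ∀ y ∈ S, x ≠ y → c x = c y → r x y ∨ r y x)
    (m : ℕ) (hm : ∀ x ∈ S, c x < m) : X.card ≤ m := by
  classical
  have h := Finset.card_le_card_of_injOn (t := Finset.range m) c
    (fun x hx => by simpa using hm x (hX hx)) (dil_inj r S X hX hA c hc)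
  simpa using h

theorem dil_surj {α : Type*} (r : α → α → Prop) (S X : Finset α) (hX : X ⊆ S) (hA : DAnti r X)
    (c : α → ℕ) (hc : ∀ x ∈ S, ∀ y ∈ S, x ≠ y → c x = c y → r x y ∨ r y x)
    (m : ℕ) (hm : ∀ x ∈ S, c x < m) (hXm : X.card = m) : ∀ p < m, ∃ x ∈ X, c x = p := by
  classical
  intro p hp
  have h : X.image c = Finset.range m := by
    apply Finset.eq_of_subset_of_card_le
    · intro q hq
      obtain ⟨x, hx, rfl⟩ := Finset.mem_image.1 hq
      simpa using hm x (hX hx)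
    · rw [Finset.card_image_of_injOn (dil_inj r S X hX hA c hc)]
      simp [hXm]
  have : p ∈ X.image c := by rw [h]; simpa using hp
  simpa using this

theorem dil_main {α : Type*} (r : α → α → Prop) (n : ℕ) : ∀ S : Finset α, S.card = n →
    (∀ x ∈ S, ¬ r x x) →
    (∀ x ∈ S, ∀ y ∈ S, ∀ z ∈ S, r x y → r y z → r x z) →
    ∃ X ⊆ S, DAnti r X ∧ ∃ c : α → ℕ, (∀ x ∈ S, c x < X.card) ∧
      (∀ x ∈ S, ∀ y ∈ S, x ≠ y → c x = c y → r x y ∨ r y x) := by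
  classical
  induction n using Nat.strong_induction_on with
  | _ n IH =>
  intro S hSn hirr htrans
  rcases S.eq_empty_or_nonempty with rfl | hne
  · exact ⟨∅, by simp, by simp [DAnti], fun _ => 0, by simp, by simp⟩
  obtain ⟨a, haS, hamax⟩ := dil_max r S hne hirr htrans
  have sub : ∀ T ⊆ S, T.card < n → ∃ X ⊆ T, DAnti r X ∧ ∃ c : α → ℕ, (∀ x ∈ T, c x < X.card) ∧
      (∀ x ∈ T, ∀ y ∈ T, x ≠ y → c x = c y → r x y ∨ r y x) := fun T hT hcard =>
    IH T.card hcard T rfl (fun x hx => hirr x (hT hx))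
      (fun x hx y hy z hz => htrans x (hT hx) y (hT hy) z (hT hz))
  have hS'S : S.erase a ⊆ S := Finset.erase_subset _ _
  obtain ⟨X, hXS, hXA, c, hcm, hc⟩ := sub (S.erase a) hS'S
    (by rw [← hSn]; exact Finset.card_erase_lt_of_mem haS)
  obtain ⟨m, hm⟩ : ∃ m, m = X.card := ⟨_, rfl⟩
  rw [← hm] at hcm
  have hf : ∀ i : ℕ, i < m → ∃ x ∈ S.erase a, c x = i ∧
      (∃ Y ⊆ S.erase a, DAnti r Y ∧ Y.card = m ∧ x ∈ Y) ∧
      ∀ y ∈ S.erase a, c y = i → (∃ Y ⊆ S.erase a, DAnti r Y ∧ Y.card = m ∧ y ∈ Y) →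
        y = x ∨ r y x := by
    intro i hi
    let T := (S.erase a).filter
      (fun y => c y = i ∧ ∃ Y ⊆ S.erase a, DAnti r Y ∧ Y.card = m ∧ y ∈ Y)
    have hTS : T ⊆ S := (Finset.filter_subset _ _).trans hS'S
    have hT : T.Nonempty := by
      obtain ⟨x, hx, hxi⟩ := dil_surj r _ X hXS hXA c hc m hcm hm.symm i hi
      exact ⟨x, Finset.mem_filter.2 ⟨hXS hx, hxi, X, hXS, hXA, hm.symm, hx⟩⟩
    obtain ⟨x, hx, hxmax⟩ := dil_max r T hT (fun x hx => hirr x (hTS hx))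
      (fun x hx y hy z hz => htrans x (hTS hx) y (hTS hy) z (hTS hz))
    obtain ⟨h1, h2, h3⟩ := Finset.mem_filter.1 hx
    refine ⟨x, h1, h2, h3, fun y hy hyi hY => ?_⟩
    by_cases hyx : y = x
    · exact Or.inl hyx
    · right
      rcases hc y hy x h1 hyx (hyi.trans h2.symm) with h | h
      · exact h
      · exact absurd h (hxmax y (Finset.mem_filter.2 ⟨hy, hyi, hY⟩))
  have : Nonempty α := ⟨a⟩
  choose! f hfS hfc hfY hfmax using hf
  by_cases hcase : ∃ i < m, r (f i) a
  · obtain ⟨i, hi, hia⟩ := hcase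
    let P : α → Prop := fun z => z = a ∨ (c z = i ∧ (z = f i ∨ r z (f i)))
    let R := S.filter (fun z => ¬ P z)
    have hRS : R ⊆ S := Finset.filter_subset _ _
    have hRS' : R ⊆ S.erase a := by
      intro z hz
      obtain ⟨h1, h2⟩ := Finset.mem_filter.1 hz
      exact Finset.mem_erase.2 ⟨fun h => h2 (Or.inl h), h1⟩
    have hRc : R.card < n := by
      rw [← hSn]
      exact (Finset.card_le_card hRS').trans_lt (Finset.card_erase_lt_of_mem haS)
    obtain ⟨X2, hX2, hA2, c2, hc2m, hc2⟩ := sub R hRS hRc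
    have hX2S := hX2.trans hRS'
    have hle := dil_card r _ X2 hX2S hA2 c hc m hcm
    have hlt : X2.card < m := by
      refine lt_of_le_of_ne hle fun heq => ?_
      obtain ⟨y, hy, hyi⟩ := dil_surj r _ X2 hX2S hA2 c hc m hcm heq i hi
      have := hfmax i hi y (hX2S hy) hyi ⟨X2, hX2S, hA2, heq, hy⟩
      exact (Finset.mem_filter.1 (hX2 hy)).2 (Or.inr ⟨hyi, this⟩)
    have hPa : ∀ z ∈ S, z ≠ a → P z → r z a := by
      intro z hz hza hPz
      rcases hPz with h | ⟨_, rfl | h⟩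
      · exact absurd h hza
      · exact hia
      · exact htrans z hz _ (hS'S (hfS i hi)) a haS h hia
    refine ⟨X, hXS.trans hS'S, hXA, fun z => if P z then m - 1 else c2 z, ?_, ?_⟩
    · intro x hx
      rw [← hm]
      by_cases hP : P x
      · simp only [hP, if_true]; omega
      · simp only [hP, if_false]
        exact (hc2m x (Finset.mem_filter.2 ⟨hx, hP⟩)).trans hlt
    · intro x hx y hy hxy hcc
      by_cases hPx : P x <;> by_cases hPy : P y <;> simp only [hPx, hPy, if_true, if_false] at hcc
      · by_cases hxa : x = a
        · subst hxa
          exact Or.inr (hPa y hy (Ne.symm hxy) hPy)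
        · by_cases hya : y = a
          · subst hya
            exact Or.inl (hPa x hx hxy hPx)
          · have h1 : c x = i := by
              rcases hPx with h | h
              · exact absurd h hxa
              · exact h.1
            have h2 : c y = i := by
              rcases hPy with h | h
              · exact absurd h hya
              · exact h.1
            exact hc x (Finset.mem_erase.2 ⟨hxa, hx⟩) y (Finset.mem_erase.2 ⟨hya, hy⟩) hxy
              (h1.trans h2.symm)
      · have := hc2m y (Finset.mem_filter.2 ⟨hy, hPy⟩)
        omega
      · have := hc2m x (Finset.mem_filter.2 ⟨hx, hPx⟩)
        omega
      · exact hc2 x (Finset.mem_filter.2 ⟨hx, hPx⟩) y (Finset.mem_filter.2 ⟨hy, hPy⟩) hxy hcc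
  · push Not at hcase
    have key : ∀ i < m, ∀ j < m, i ≠ j → ¬ r (f i) (f j) := by
      intro i hi j hj hij hr
      obtain ⟨Y, hYS, hYA, hYm, hjY⟩ := hfY j hj
      obtain ⟨y, hy, hyi⟩ := dil_surj r _ Y hYS hYA c hc m hcm hYm i hi
      have hyj : y ≠ f j := by
        rintro rfl
        exact hij (hyi.symm.trans (hfc j hj))
      have hry : r y (f j) := by
        rcases hfmax i hi y (hYS hy) hyi ⟨Y, hYS, hYA, hYm, hy⟩ with rfl | h
        · exact hr
        · exact htrans y (hS'S (hYS hy)) _ (hS'S (hfS i hi)) _ (hS'S (hfS j hj)) h hr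
      exact (hYA y hy _ hjY hyj).1 hry
    let A := (Finset.range m).image f
    have hAmem : ∀ x ∈ A, ∃ i < m, f i = x := by
      intro x hx
      simpa [A] using hx
    have hAS : A ⊆ S.erase a := by
      intro x hxA
      obtain ⟨i, hi, rfl⟩ := hAmem x hxA
      exact hfS i hi
    have haA : a ∉ A := fun h => (Finset.mem_erase.1 (hAS h)).1 rfl
    have hAc : A.card = m := by
      have hinj : Set.InjOn f (Finset.range m : Set ℕ) := by
        intro i hi j hj hij
        have hi' : i < m := by simpa using hi
        have hj' : j < m := by simpa using hj
        rw [← hfc i hi', ← hfc j hj', hij]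
      rw [Finset.card_image_of_injOn hinj, Finset.card_range]
    have hcard : (insert a A).card = m + 1 := by
      rw [Finset.card_insert_of_notMem haA, hAc]
    refine ⟨insert a A, ?_, ?_, fun z => if z = a then m else c z, ?_, ?_⟩
    · exact Finset.insert_subset haS (hAS.trans hS'S)
    · intro x hx y hy hxy
      rcases Finset.mem_insert.1 hx with rfl | hxA <;> rcases Finset.mem_insert.1 hy with rfl | hyA
      · exact absurd rfl hxy
      · obtain ⟨j, hj, rfl⟩ := hAmem y hyA
        exact ⟨hamax _ (hS'S (hfS j hj)), hcase j hj⟩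
      · obtain ⟨j, hj, rfl⟩ := hAmem x hxA
        exact ⟨hcase j hj, hamax _ (hS'S (hfS j hj))⟩
      · obtain ⟨i, hi, rfl⟩ := hAmem x hxA
        obtain ⟨j, hj, rfl⟩ := hAmem y hyA
        have hij : i ≠ j := fun h => hxy (by rw [h])
        exact ⟨key i hi j hj hij, key j hj i hi hij.symm⟩
    · intro x hx
      rw [hcard]
      by_cases hxa : x = a
      · simp [hxa]
      · simp only [hxa, if_false]
        exact (hcm x (Finset.mem_erase.2 ⟨hxa, hx⟩)).trans (Nat.lt_succ_self m)
    · intro x hx y hy hxy hcc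
      by_cases hxa : x = a <;> by_cases hya : y = a <;> simp only [hxa, hya, if_true, if_false] at hcc
      · exact absurd (hxa.trans hya.symm) hxy
      · have := hcm y (Finset.mem_erase.2 ⟨hya, hy⟩)
        omega
      · have := hcm x (Finset.mem_erase.2 ⟨hxa, hx⟩)
        omega
      · exact hc x (Finset.mem_erase.2 ⟨hxa, hx⟩) y (Finset.mem_erase.2 ⟨hya, hy⟩) hxy hcc


/-- Let `S` be a finite set equipped with a strict partial order `r` (irreflexive
and transitive on `S`).  If every totally disordered (pairwise incomparable) subset of `S` has
at most `k` elements, then `S` can be partitioned into at most `k` linearly ordered subsets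
(encoded by a coloring `c : α → ℕ` with fewer than `k` colors on `S`, each color class being a
chain).  Moreover, if `l` is the maximal cardinality of a totally disordered subset of `S`,
then `S` can be partitioned into exactly `l` linearly ordered subsets (each of the `l` color
classes being nonempty). -/
theorem stmt0 {α : Type*} (S : Finset α) (r : α → α → Prop)
    (hirr : ∀ x ∈ S, ¬ r x x)
    (htrans : ∀ x ∈ S, ∀ y ∈ S, ∀ z ∈ S, r x y → r y z → r x z)
    (k l : ℕ)
    (hk : ∀ X ⊆ S, (∀ x ∈ X, ∀ y ∈ X, x ≠ y → ¬ r x y ∧ ¬ r y x) → X.card ≤ k)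
    (hl_max : ∀ X ⊆ S, (∀ x ∈ X, ∀ y ∈ X, x ≠ y → ¬ r x y ∧ ¬ r y x) → X.card ≤ l)
    (hl_attained : ∃ X ⊆ S, (∀ x ∈ X, ∀ y ∈ X, x ≠ y → ¬ r x y ∧ ¬ r y x) ∧ X.card = l) :
    (∃ c : α → ℕ, (∀ x ∈ S, c x < k) ∧
      (∀ x ∈ S, ∀ y ∈ S, x ≠ y → c x = c y → r x y ∨ r y x)) ∧
    (∃ c : α → ℕ, (∀ x ∈ S, c x < l) ∧
      (∀ x ∈ S, ∀ y ∈ S, x ≠ y → c x = c y → r x y ∨ r y x) ∧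
      (∀ p < l, ∃ x ∈ S, c x = p)) := by

  obtain ⟨X, hX, hXA, c, hcm, hc⟩ := dil_main r S.card S rfl hirr htrans
  have h1 : ∀ x ∈ S, c x < l := fun x hx => (hcm x hx).trans_le (hl_max X hX hXA)
  refine ⟨⟨c, fun x hx => (hcm x hx).trans_le (hk X hX hXA), hc⟩, c, h1, hc, fun p hp => ?_⟩
  obtain ⟨Z, hZ, hZA, hZl⟩ := hl_attained
  obtain ⟨x, hx, hxp⟩ := dil_surj r S Z hZ hZA c hc l h1 hZl p hp
  exact ⟨x, hZ hx, hxp⟩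
end

section
/- Let (X,<) be a linearly ordered set, and order finite multisets over X as follows: for finite multisets M and N over X, set M < N if and only if, listing the elements of each multiset in decreasing order, either at the first position where the two lists differ the element of M is smaller than that of N, or the list of M is a proper initial segment of the list of N; write M ≤ N for M < N or M = N. Then: if M₁ ≤ N₁ and M₂ ≤ N₂, then M₁ + M₂ ≤ N₁ + N₂ (multiset sum); and if in addition M₁ < N₁ or M₂ < N₂, then M₁ + M₂ < N₁ + N₂. -/
/-- The elements of a finite multiset over a linearly ordered set, listed in decreasing order. -/
def descList {X : Type*} [LinearOrder X] (M : Multiset X) : List X :=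
  (M.sort (· ≤ ·)).reverse

/-- The order on finite multisets over a linearly ordered set: `M < N` iff, listing the
elements of each multiset in decreasing order, either at the first position where the two
lists differ the element of `M` is smaller than that of `N`, or the list of `M` is a proper
initial segment of the list of `N`. -/
def mlt {X : Type*} [LinearOrder X] (M N : Multiset X) : Prop :=
  List.Lex (· < ·) (descList M) (descList N)

/-- `M ≤ N` iff `M < N` or `M = N`. -/
def mle {X : Type*} [LinearOrder X] (M N : Multiset X) : Prop :=
  mlt M N ∨ M = N

theorem lex_insert_aux {X : Type*} [LinearOrder X] (a : X) {l l' : List X}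
    (h : List.Lex (· < ·) l l') :
    List.Lex (· < ·) (l.orderedInsert (· ≥ ·) a) (l'.orderedInsert (· ≥ ·) a) := by
  induction h with
  | @nil c t =>
    simp only [List.orderedInsert_nil, List.orderedInsert_cons]
    split_ifs with h
    · exact .cons .nil
    · exact .rel (not_le.mp h)
  | @cons b t t' h ih =>
    simp only [List.orderedInsert_cons]
    split_ifs with h1
    · exact .cons (.cons h)
    · exact .cons ih
  | @rel b t c t' h =>
    simp only [List.orderedInsert_cons]
    split_ifs with h1 h2 h2
    · exact .cons (.rel h)
    · exact .rel (not_le.mp h2)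
    · exact absurd (h.le.trans h2) h1
    · exact .rel h

theorem descList_pairwise {X : Type*} [LinearOrder X] (M : Multiset X) :
    (descList M).Pairwise (· ≥ ·) := by
  unfold descList
  rw [List.pairwise_reverse]
  exact M.pairwise_sort (· ≤ ·)

theorem descList_coe {X : Type*} [LinearOrder X] (M : Multiset X) :
    (descList M : Multiset X) = M := by
  unfold descList
  rw [Multiset.coe_reverse, Multiset.sort_eq]

theorem descList_cons {X : Type*} [LinearOrder X] (a : X) (M : Multiset X) :
    descList (a ::ₘ M) = (descList M).orderedInsert (· ≥ ·) a := by
  have hp : (descList (a ::ₘ M)).Perm ((descList M).orderedInsert (· ≥ ·) a) := by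
    refine List.Perm.trans ?_ (List.perm_orderedInsert _ _ _).symm
    rw [← Multiset.coe_eq_coe, ← Multiset.cons_coe, descList_coe, descList_coe]
  exact hp.eq_of_pairwise (fun _ _ _ _ h1 h2 => le_antisymm h2 h1) (descList_pairwise _)
    ((descList_pairwise M).orderedInsert a _)

theorem mlt_add_left {X : Type*} [LinearOrder X] (K : Multiset X) {M N : Multiset X}
    (h : mlt M N) : mlt (K + M) (K + N) := by
  induction K using Multiset.induction_on with
  | empty => simpa using h
  | cons a K ih =>
    rw [Multiset.cons_add, Multiset.cons_add]
    unfold mlt at ih ⊢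
    rw [descList_cons, descList_cons]
    exact lex_insert_aux a ih

theorem mlt_add_right {X : Type*} [LinearOrder X] (K : Multiset X) {M N : Multiset X}
    (h : mlt M N) : mlt (M + K) (N + K) := by
  rw [add_comm M, add_comm N]
  exact mlt_add_left K h

theorem mlt_trans' {X : Type*} [LinearOrder X] {K M N : Multiset X}
    (h : mlt K M) (h' : mlt M N) : mlt K N := by
  unfold mlt at *
  exact List.lt_trans (α := X) h h'

theorem mlt_irrefl' {X : Type*} [LinearOrder X] (M : Multiset X) : ¬ mlt M M := by
  unfold mlt
  exact irrefl _

/-- the multiset order is compatible with multiset sum: if `M₁ ≤ N₁` and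
`M₂ ≤ N₂` then `M₁ + M₂ ≤ N₁ + N₂`, and if moreover `M₁ < N₁` or `M₂ < N₂` then
`M₁ + M₂ < N₁ + N₂`. -/
theorem stmt1 {X : Type*} [LinearOrder X] (M₁ M₂ N₁ N₂ : Multiset X)
    (h₁ : mle M₁ N₁) (h₂ : mle M₂ N₂) :
    mle (M₁ + M₂) (N₁ + N₂) ∧
      ((mlt M₁ N₁ ∨ mlt M₂ N₂) → mlt (M₁ + M₂) (N₁ + N₂)) := by
  rcases h₁ with h₁ | rfl <;> rcases h₂ with h₂ | rfl
  · have := mlt_trans' (mlt_add_right M₂ h₁) (mlt_add_left N₁ h₂)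
    exact ⟨.inl this, fun _ => this⟩
  · have := mlt_add_right M₂ h₁
    exact ⟨.inl this, fun _ => this⟩
  · have := mlt_add_left M₁ h₂
    exact ⟨.inl this, fun _ => this⟩
  · exact ⟨.inr rfl, fun h => (h.elim (mlt_irrefl' _) (mlt_irrefl' _)).elim⟩
end
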